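/- arXiv:2306.01450 — 2 statements merged into one kernel-verified Lean document; each statement's English description precedes it below -/
import Mathlib

section
/- Let D ≥ 1 be an integer, t > 0, λ > 0, and p_0, …, p_D > 0 reals. Let Δ = {x = (x_1,…,x_D) ∈ ℝ^D : x_i > 0 for all i and x_1 + ⋯ + x_D < t}, and for x ∈ Δ write x_0 = t − (x_1 + ⋯ + x_D). Then the Lebesgue integral over Δ of the (pointwise convergent, nonnegative) series x ↦ Σ_{(n_0,…,n_D)} (n_0+⋯+n_D)! ∏_{h=0}^{D} (λ p_h)^{n_h} x_h^{n_h − 1} / ((n_h − 1)! n_h!), where the sum ranges over all (D+1)-tuples of positive integers n_0,…,n_D ≥ 1, equals λ · Σ_{h=0}^{D} p_h e^{λ t p_h} ∏_{j=0, j≠h}^{D} (e^{λ t p_j} − 1). -/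
open MeasureTheory

theorem aux_deriv (a : ℕ) (s : ℝ) : HasDerivAt (fun s : ℝ => s ^ (a+1) / ((a+1).factorial : ℝ))
    (s ^ a / (a.factorial : ℝ)) s := by
  have h := (hasDerivAt_pow (a+1) s).div_const ((a+1).factorial : ℝ)
  convert! h using 1
  have : (a.factorial : ℝ) ≠ 0 := by positivity
  have : (a : ℝ) + 1 ≠ 0 := by positivity
  rw [Nat.factorial_succ]; push_cast; field_simp

theorem aux_deriv' (b : ℕ) (t s : ℝ) :
    HasDerivAt (fun s : ℝ => -((t - s) ^ (b+1) / ((b+1).factorial : ℝ)))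
    ((t-s) ^ b / (b.factorial : ℝ)) s := by
  have h := ((aux_deriv b (t - s)).comp s ((hasDerivAt_id s).const_sub t)).neg
  convert! h using 1
  ring

theorem aux_beta (a : ℕ) : ∀ (b : ℕ) (t : ℝ), 
    ∫ s in (0:ℝ)..t, s ^ a / (a.factorial : ℝ) * ((t - s) ^ b / (b.factorial : ℝ))
      = t ^ (a + b + 1) / ((a+b+1).factorial : ℝ) := by
  induction a with
  | zero =>
    intro b t
    have := intervalIntegral.integral_eq_sub_of_hasDerivAt (a := 0) (b := t)
      (fun s _ => aux_deriv' b t s) (Continuous.intervalIntegrable (by fun_prop) _ _)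
    simp [this]
  | succ a ih =>
    intro b t
    have := intervalIntegral.integral_mul_deriv_eq_deriv_mul (a := 0) (b := t)
      (fun s _ => aux_deriv a s) (fun s _ => aux_deriv' b t s)
      (Continuous.intervalIntegrable (by fun_prop) _ _) (Continuous.intervalIntegrable (by fun_prop) _ _)
    rw [this]
    have h2 := ih (b+1) t
    simp only [mul_neg, intervalIntegral.integral_neg, h2]
    simp
    congr 2 <;> ring_nf

/-- truncated monomial -/
noncomputable def fm (m : ℕ) (s : ℝ) : ENNReal :=
  if 0 < s then ENNReal.ofReal (s ^ m / (m.factorial : ℝ)) else 0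

theorem fm_meas (m : ℕ) : Measurable (fm m) := by
  unfold fm
  refine Measurable.ite measurableSet_Ioi ?_ measurable_const
  fun_prop

theorem fm_conv (a b : ℕ) (t : ℝ) : ∫⁻ s, fm a s * fm b (t - s) = fm (a + b + 1) t := by
  have h1 : (fun s => fm a s * fm b (t - s)) = Set.indicator (Set.Ioo 0 t)
      (fun s => ENNReal.ofReal (s ^ a / (a.factorial : ℝ) * ((t - s) ^ b / (b.factorial : ℝ)))) := by
    funext s
    by_cases hs : 0 < s
    · by_cases hs2 : s < t
      · rw [Set.indicator_of_mem (by exact ⟨hs, hs2⟩), ENNReal.ofReal_mul (by positivity)]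
        simp [fm, hs, hs2]
      · rw [Set.indicator_of_notMem (fun h => hs2 h.2)]
        simp [fm, hs2]
    · rw [Set.indicator_of_notMem (fun h => hs h.1)]
      simp [fm, hs]
  rw [h1, lintegral_indicator measurableSet_Ioo]
  by_cases ht : 0 < t
  · rw [← ofReal_integral_eq_lintegral_ofReal, ← integral_Ioc_eq_integral_Ioo,
      ← intervalIntegral.integral_of_le ht.le, aux_beta]
    · simp [fm, ht]
    · exact (Continuous.integrableOn_Icc (a := 0) (b := t) (by fun_prop)).mono_set Set.Ioo_subset_Icc_self
    · filter_upwards [ae_restrict_mem measurableSet_Ioo] with s hs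
      have := hs.1
      have : 0 < t - s := sub_pos.2 hs.2
      simp only [Pi.zero_apply]
      positivity
  · rw [Set.Ioo_eq_empty ht]; simp [fm, ht]

theorem fm_dirichlet (D : ℕ) : ∀ (m : Fin D → ℕ) (m0 : ℕ) (t : ℝ),
    ∫⁻ x : Fin D → ℝ, fm m0 (t - ∑ i, x i) * ∏ i, fm (m i) (x i) = fm (m0 + ∑ i, m i + D) t := by
  induction D with
  | zero =>
    intro m m0 t
    rw [Measure.volume_pi_eq_dirac 0]
    simp
  | succ D ih =>
    intro m m0 t
    have hm : Measurable (fun z : ℝ × (Fin D → ℝ) => fm m0 (t - (z.1 + ∑ i, z.2 i)) *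
        (fm (m 0) z.1 * ∏ i, fm (m i.succ) (z.2 i))) := by
      refine Measurable.mul ((fm_meas _).comp (by fun_prop)) (Measurable.mul ((fm_meas _).comp (by fun_prop)) ?_)
      refine Finset.measurable_prod _ fun i _ => (fm_meas _).comp (by fun_prop)
    have h := (volume_preserving_piFinSuccAbove (fun _ : Fin (D+1) => ℝ) 0).lintegral_comp_emb
      (MeasurableEquiv.measurableEmbedding _) (fun z : ℝ × (Fin D → ℝ) => fm m0 (t - (z.1 + ∑ i, z.2 i)) *
        (fm (m 0) z.1 * ∏ i, fm (m i.succ) (z.2 i)))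
    calc _ = ∫⁻ z : ℝ × (Fin D → ℝ), fm m0 (t - (z.1 + ∑ i, z.2 i)) *
        (fm (m 0) z.1 * ∏ i, fm (m i.succ) (z.2 i)) := by
          rw [← h]
          refine lintegral_congr fun x => ?_
          rw [Fin.sum_univ_succ, Fin.prod_univ_succ]
          rfl
      _ = ∫⁻ s : ℝ, ∫⁻ y : Fin D → ℝ, fm m0 (t - (s + ∑ i, y i)) *
        (fm (m 0) s * ∏ i, fm (m i.succ) (y i)) := by
          rw [Measure.volume_eq_prod, lintegral_prod _ hm.aemeasurable]
      _ = ∫⁻ s : ℝ, fm (m 0) s * fm (m0 + ∑ i : Fin D, m i.succ + D) (t - s) := by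
          refine lintegral_congr fun s => ?_
          rw [← ih, ← lintegral_const_mul]
          · refine lintegral_congr fun y => ?_
            rw [← sub_sub]; ring
          · refine Measurable.mul ((fm_meas _).comp (by fun_prop)) ?_
            refine Finset.measurable_prod _ fun i _ => (fm_meas _).comp (by fun_prop)
      _ = _ := by
          rw [fm_conv, Fin.sum_univ_succ]; congr 1; ring

theorem hasSum_mul_nn {α β : Type} {f : α → ℝ} {g : β → ℝ} {a b : ℝ} (hf : HasSum f a)
    (hg : HasSum g b) (f0 : ∀ i, 0 ≤ f i) (g0 : ∀ i, 0 ≤ g i) :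
    HasSum (fun z : α × β => f z.1 * g z.2) (a * b) :=
  hf.mul hg (hf.summable.mul_of_nonneg hg.summable f0 g0)

theorem hasSum_pi_prod (k : ℕ) : ∀ (f : Fin k → ℕ → ℝ) (a : Fin k → ℝ), (∀ i n, 0 ≤ f i n) →
    (∀ i, HasSum (f i) (a i)) → HasSum (fun n : Fin k → ℕ => ∏ i, f i (n i)) (∏ i, a i) := by
  induction k with
  | zero => intro f a _ _; simp
  | succ k ih =>
    intro f a hf ha
    have h := ih (fun i => f i.succ) (fun i => a i.succ) (fun i n => hf _ _) (fun i => ha _)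
    have h2 := hasSum_mul_nn (ha 0) h (hf 0) (fun n => Finset.prod_nonneg fun i _ => hf i.succ (n i))
    rw [Fin.prod_univ_succ, ← (Fin.consEquiv (fun _ : Fin (k+1) => ℕ)).hasSum_iff]
    convert! h2 using 2 with z
    simp [Fin.prod_univ_succ, Fin.consEquiv]

theorem fact_sum_le (k : ℕ) (n : Fin k → ℕ) :
    ((∑ i, n i).factorial : ℝ) ≤ ∏ i, ((k : ℝ) ^ n i * ((n i).factorial : ℝ)) := by
  have h := Finset.sum_pow_eq_sum_piAntidiag (Finset.univ : Finset (Fin k)) (fun _ => (1:ℕ)) (∑ i, n i)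
  have h2 : Nat.multinomial Finset.univ n ≤ k ^ (∑ i, n i) := by
    simp at h
    rw [h]
    exact Finset.single_le_sum (f := fun x => Nat.multinomial Finset.univ x) (fun _ _ => Nat.zero_le _) (by simp)
  rw [← Nat.multinomial_spec, Finset.prod_mul_distrib, Finset.prod_pow_eq_pow_sum]
  push_cast
  rw [mul_comm]
  gcongr
  exact_mod_cast h2

def shiftE (k : ℕ) : (Fin k → ℕ) ≃ {n : Fin k → ℕ // ∀ i, 1 ≤ n i} where
  toFun m := ⟨fun i => m i + 1, fun i => Nat.le_add_left 1 (m i)⟩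
  invFun n := fun i => n.1 i - 1
  left_inv m := by funext i; simp
  right_inv n := by ext i; exact Nat.sub_add_cancel (n.2 i)

/-- the summand, with shifted indices -/
noncomputable def TT (D : ℕ) (t l : ℝ) (p : Fin (D + 1) → ℝ) (m : Fin (D+1) → ℕ) (x : Fin D → ℝ) : ℝ :=
  ((∑ h, (m h + 1)).factorial : ℝ) *
        ∏ h, (l * p h) ^ (m h + 1) *
          (Fin.cons (α := fun _ => ℝ) (t - ∑ i, x i) x h) ^ (m h) /
          (((m h).factorial : ℝ) * ((m h + 1).factorial : ℝ))

noncomputable def CC (D : ℕ) (l : ℝ) (p : Fin (D + 1) → ℝ) (m : Fin (D+1) → ℕ) : ℝ :=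
  ((∑ h, (m h + 1)).factorial : ℝ) * ∏ h, (l * p h) ^ (m h + 1) / ((m h + 1).factorial : ℝ)

theorem TT_eq (D : ℕ) (t l : ℝ) (p : Fin (D + 1) → ℝ) (m : Fin (D+1) → ℕ) (x : Fin D → ℝ) :
    TT D t l p m x = CC D l p m * ((t - ∑ i, x i) ^ (m 0) / ((m 0).factorial : ℝ) *
      ∏ i, (x i) ^ (m i.succ) / ((m i.succ).factorial : ℝ)) := by
  have : (t - ∑ i, x i) ^ (m 0) / ((m 0).factorial : ℝ) *
      ∏ i, (x i) ^ (m i.succ) / ((m i.succ).factorial : ℝ) = 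
      ∏ h, (Fin.cons (α := fun _ => ℝ) (t - ∑ i, x i) x h) ^ (m h) / ((m h).factorial : ℝ) := by
    rw [Fin.prod_univ_succ]; simp
  rw [this, TT, CC, mul_assoc, ← Finset.prod_mul_distrib]
  congr 1
  refine Finset.prod_congr rfl fun h _ => ?_
  rw [div_mul_div_comm, mul_comm ((m h).factorial : ℝ)]

theorem CC_nonneg (D : ℕ) (l : ℝ) (hl : 0 < l) (p : Fin (D + 1) → ℝ) (hp : ∀ i, 0 < p i)
    (m : Fin (D+1) → ℕ) : 0 ≤ CC D l p m := by
  unfold CC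
  refine mul_nonneg (by positivity) (Finset.prod_nonneg fun i _ => ?_)
  have := hp i
  positivity

def OpenSx (D : ℕ) (t : ℝ) : Set (Fin D → ℝ) := {x : Fin D → ℝ | (∀ i, 0 < x i) ∧ ∑ i, x i < t}

theorem TT_nonneg (D : ℕ) (t l : ℝ) (hl : 0 < l) (p : Fin (D + 1) → ℝ) (hp : ∀ i, 0 < p i)
    (m : Fin (D+1) → ℕ) (x : Fin D → ℝ) (hx : x ∈ OpenSx D t) : 0 ≤ TT D t l p m x := by
  rw [TT_eq]
  have h1 : 0 < t - ∑ i, x i := sub_pos.2 hx.2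
  refine mul_nonneg (CC_nonneg D l hl p hp m) (mul_nonneg (by positivity) (Finset.prod_nonneg fun i _ => ?_))
  have := hx.1 i
  positivity

theorem OpenSx_meas (D : ℕ) (t : ℝ) : MeasurableSet (OpenSx D t) := by
  have : OpenSx D t = (⋂ i, {x : Fin D → ℝ | 0 < x i}) ∩ {x : Fin D → ℝ | ∑ i, x i < t} := by
    ext x; simp [OpenSx]
  rw [this]
  refine MeasurableSet.inter (MeasurableSet.iInter fun i => ?_) ?_
  · exact measurableSet_lt measurable_const (by fun_prop)
  · exact measurableSet_lt (by fun_prop) measurable_const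

theorem TT_lintegral (D : ℕ) (t l : ℝ) (ht : 0 < t) (hl : 0 < l) (p : Fin (D + 1) → ℝ)
    (hp : ∀ i, 0 < p i) (m : Fin (D+1) → ℕ) :
    ∫⁻ x in OpenSx D t, ENNReal.ofReal (TT D t l p m x) =
      ENNReal.ofReal (CC D l p m * (t ^ (∑ h, m h + D) / ((∑ h, m h + D).factorial : ℝ))) := by
  have hC := CC_nonneg D l hl p hp m
  have hfun : (OpenSx D t).indicator (fun x => ENNReal.ofReal (TT D t l p m x)) =
      fun x => ENNReal.ofReal (CC D l p m) *
        (fm (m 0) (t - ∑ i, x i) * ∏ i, fm (m i.succ) (x i)) := by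
    funext x
    by_cases hx : x ∈ OpenSx D t
    · have h1 : 0 < t - ∑ i, x i := sub_pos.2 hx.2
      rw [Set.indicator_of_mem hx, TT_eq, ENNReal.ofReal_mul hC, ENNReal.ofReal_mul (by positivity),
        ENNReal.ofReal_prod_of_nonneg]
      · congr 2
        · rw [fm, if_pos h1]
        · refine Finset.prod_congr rfl fun i _ => ?_
          rw [fm, if_pos (hx.1 i)]
      · intro i _
        have := hx.1 i
        positivity
    · rw [Set.indicator_of_notMem hx]
      by_cases h1 : 0 < t - ∑ i, x i
      · have : ∃ i, ¬ 0 < x i := by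
          by_contra! h
          exact hx ⟨h, sub_pos.1 h1⟩
        obtain ⟨i, hi⟩ := this
        rw [Finset.prod_eq_zero (Finset.mem_univ i) (by rw [fm, if_neg hi])]
        simp
      · rw [fm, if_neg h1]; simp
  rw [← lintegral_indicator (OpenSx_meas D t), hfun, lintegral_const_mul, fm_dirichlet, fm, if_pos ht,
    ENNReal.ofReal_mul hC, Fin.sum_univ_succ]
  refine Measurable.mul ((fm_meas _).comp (by fun_prop)) ?_
  exact Finset.measurable_prod _ fun i _ => (fm_meas _).comp (by fun_prop)

theorem TT_cont (D : ℕ) (t l : ℝ) (p : Fin (D + 1) → ℝ) (m : Fin (D+1) → ℕ) :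
    Continuous (TT D t l p m) := by
  have : TT D t l p m = _ := funext (TT_eq D t l p m)
  rw [this]
  fun_prop

theorem TT_integrable (D : ℕ) (t l : ℝ) (ht : 0 < t) (hl : 0 < l) (p : Fin (D + 1) → ℝ)
    (hp : ∀ i, 0 < p i) (m : Fin (D+1) → ℕ) : 
    Integrable (TT D t l p m) (volume.restrict (OpenSx D t)) := by
  refine ⟨(TT_cont D t l p m).aestronglyMeasurable, ?_⟩
  rw [hasFiniteIntegral_iff_ofReal]
  · rw [TT_lintegral D t l ht hl p hp]; exact ENNReal.ofReal_lt_top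
  · filter_upwards [ae_restrict_mem (OpenSx_meas D t)] with x hx using TT_nonneg D t l hl p hp m x hx

theorem TT_integral (D : ℕ) (t l : ℝ) (ht : 0 < t) (hl : 0 < l) (p : Fin (D + 1) → ℝ)
    (hp : ∀ i, 0 < p i) (m : Fin (D+1) → ℕ) : 
    ∫ x in OpenSx D t, TT D t l p m x =
      CC D l p m * (t ^ (∑ h, m h + D) / ((∑ h, m h + D).factorial : ℝ)) := by
  rw [integral_eq_lintegral_of_nonneg_ae _ (TT_cont D t l p m).aestronglyMeasurable,
    TT_lintegral D t l ht hl p hp, ENNReal.toReal_ofReal]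
  · have := CC_nonneg D l hl p hp m
    positivity
  · filter_upwards [ae_restrict_mem (OpenSx_meas D t)] with x hx using TT_nonneg D t l hl p hp m x hx

theorem real_hasSum_exp (x : ℝ) : HasSum (fun n : ℕ => x ^ n / (n.factorial : ℝ)) (Real.exp x) := by
  rw [Real.exp_eq_exp_ℝ]; exact NormedSpace.expSeries_div_hasSum_exp x

theorem real_hasSum_exp1 (x : ℝ) :
    HasSum (fun n : ℕ => x ^ (n+1) / ((n+1).factorial : ℝ)) (Real.exp x - 1) := by
  have := (hasSum_nat_add_iff' 1).2 (real_hasSum_exp x)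
  simpa using this

theorem coef_hasSum (D : ℕ) (t l : ℝ) (ht : 0 < t) (hl : 0 < l) (p : Fin (D + 1) → ℝ)
    (hp : ∀ i, 0 < p i) :
    HasSum (fun m : Fin (D+1) → ℕ =>
      CC D l p m * (t ^ (∑ h, m h + D) / ((∑ h, m h + D).factorial : ℝ)))
     (l * ∑ h : Fin (D + 1), p h * Real.exp (l * t * p h) *
        ∏ j ∈ Finset.univ.erase h, (Real.exp (l * t * p j) - 1)) := by
  have key : ∀ h : Fin (D+1), HasSum (fun m : Fin (D+1) → ℕ =>
      ∏ j, (if j = h then l * p j * ((l * t * p j) ^ m j / ((m j).factorial : ℝ)) else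
        (l * t * p j) ^ (m j + 1) / ((m j + 1).factorial : ℝ)))
      (∏ j, if j = h then l * p j * Real.exp (l * t * p j) else Real.exp (l * t * p j) - 1) := by
    intro h
    refine hasSum_pi_prod (D+1) (fun j n => if j = h then l * p j * ((l * t * p j) ^ n / (n.factorial : ℝ)) else
        (l * t * p j) ^ (n + 1) / ((n + 1).factorial : ℝ)) _ ?_ ?_
    · intro i n
      have := hp i
      split_ifs <;> positivity
    · intro i
      split_ifs
      · exact (real_hasSum_exp _).mul_left _
      · exact real_hasSum_exp1 _
  have tot := hasSum_sum (s := Finset.univ) fun h _ => key h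
  convert! tot using 1
  · funext m
    have hN : ∑ h, (m h + 1) = (∑ h, m h + D) + 1 := by
      rw [Finset.sum_add_distrib]; simp; ring
    have e1 : ∀ h : Fin (D+1), (∏ j, (if j = h then l * p j * ((l * t * p j) ^ m j / ((m j).factorial : ℝ)) else
        (l * t * p j) ^ (m j + 1) / ((m j + 1).factorial : ℝ))) =
        ((m h + 1 : ℕ) : ℝ) * (t⁻¹ * ∏ j, (l * t * p j) ^ (m j + 1) / ((m j + 1).factorial : ℝ)) := by
      intro h
      rw [← Finset.mul_prod_erase _ _ (Finset.mem_univ h), 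
        ← Finset.mul_prod_erase _ (fun j => (l * t * p j) ^ (m j + 1) / ((m j + 1).factorial : ℝ)) (Finset.mem_univ h),
        ← mul_assoc, ← mul_assoc, if_pos rfl]
      congr 1
      · rw [Nat.factorial_succ]
        push_cast
        field_simp
        ring
      · refine Finset.prod_congr rfl fun j hj => ?_
        rw [if_neg (Finset.ne_of_mem_erase hj)]
    rw [Finset.sum_congr rfl fun h _ => e1 h, ← Finset.sum_mul, ← Nat.cast_sum, CC, hN]
    have e2 : ∏ j, (l * t * p j) ^ (m j + 1) / ((m j + 1).factorial : ℝ) =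
       t ^ (∑ h, m h + D + 1) * ∏ h, (l * p h) ^ (m h + 1) / ((m h + 1).factorial : ℝ) := by
      rw [← hN, ← Finset.prod_pow_eq_pow_sum, ← Finset.prod_mul_distrib]
      refine Finset.prod_congr rfl fun j hj => ?_
      rw [← mul_div_assoc, ← mul_pow]; ring
    rw [e2, Nat.factorial_succ, pow_succ]
    push_cast
    field_simp
  · rw [Finset.mul_sum]
    refine Finset.sum_congr rfl fun h _ => ?_
    rw [← Finset.mul_prod_erase _ _ (Finset.mem_univ h), if_pos rfl, ← mul_assoc, ← mul_assoc]
    congr 1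
    refine Finset.prod_congr rfl fun j hj => ?_
    rw [if_neg (Finset.ne_of_mem_erase hj)]

theorem TT_summable (D : ℕ) (t l : ℝ) (hl : 0 < l) (p : Fin (D + 1) → ℝ)
    (hp : ∀ i, 0 < p i) (x : Fin D → ℝ) (hx : x ∈ OpenSx D t) :
    Summable (fun m => TT D t l p m x) := by
  set y : Fin (D+1) → ℝ := Fin.cons (α := fun _ => ℝ) (t - ∑ i, x i) x with hy
  have hy0 : ∀ h, 0 < y h := by
    intro h
    refine Fin.cases ?_ (fun i => ?_) h
    · simpa [hy] using hx.2
    · simpa [hy] using hx.1 i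
  have hs := hasSum_pi_prod (D+1)
    (fun h n => ((D+1 : ℕ) : ℝ) * (l * p h) * ((((D+1 : ℕ) : ℝ) * (l * p h) * y h) ^ n / (n.factorial : ℝ)))
    _ (fun h n => by have := hp h; have := hy0 h; positivity)
    (fun h => (real_hasSum_exp _).mul_left _)
  refine Summable.of_nonneg_of_le (fun m => TT_nonneg D t l hl p hp m x hx) (fun m => ?_) hs.summable
  rw [TT, ← hy]
  calc _ ≤ (∏ h, (((D+1 : ℕ) : ℝ) ^ (m h + 1) * ((m h + 1).factorial : ℝ))) * 
        ∏ h, (l * p h) ^ (m h + 1) * (y h) ^ (m h) /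
          (((m h).factorial : ℝ) * ((m h + 1).factorial : ℝ)) := by
        refine mul_le_mul_of_nonneg_right (fact_sum_le (D+1) (fun h => m h + 1)) 
          (Finset.prod_nonneg fun h _ => ?_)
        have := hp h
        have := hy0 h
        positivity
    _ = _ := by
        rw [← Finset.prod_mul_distrib]
        refine Finset.prod_congr rfl fun h _ => ?_
        have : ((m h + 1).factorial : ℝ) ≠ 0 := by positivity
        field_simp
        ring

open MeasureTheory in
theorem stmt14 (D : ℕ) (hD : 1 ≤ D) (t l : ℝ) (ht : 0 < t) (hl : 0 < l)
    (p : Fin (D + 1) → ℝ) (hp : ∀ i, 0 < p i)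
    (Δ : Set (Fin D → ℝ))
    (hΔ : Δ = {x : Fin D → ℝ | (∀ i, 0 < x i) ∧ ∑ i, x i < t})
    (F : (Fin D → ℝ) → ℝ)
    (hF : ∀ x, F x = ∑' n : {n : Fin (D + 1) → ℕ // ∀ i, 1 ≤ n i},
      ((∑ h, n.1 h).factorial : ℝ) *
        ∏ h, (l * p h) ^ n.1 h *
          (Fin.cons (α := fun _ => ℝ) (t - ∑ i, x i) x h) ^ (n.1 h - 1) /
          (((n.1 h - 1).factorial : ℝ) * ((n.1 h).factorial : ℝ))) :
    (∀ x ∈ Δ, Summable (fun n : {n : Fin (D + 1) → ℕ // ∀ i, 1 ≤ n i} =>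
      ((∑ h, n.1 h).factorial : ℝ) *
        ∏ h, (l * p h) ^ n.1 h *
          (Fin.cons (α := fun _ => ℝ) (t - ∑ i, x i) x h) ^ (n.1 h - 1) /
          (((n.1 h - 1).factorial : ℝ) * ((n.1 h).factorial : ℝ)))) ∧
    (∀ x ∈ Δ, 0 ≤ F x) ∧
    ∫ x in Δ, F x =
      l * ∑ h : Fin (D + 1), p h * Real.exp (l * t * p h) *
        ∏ j ∈ Finset.univ.erase h, (Real.exp (l * t * p j) - 1) := by
  subst hΔ
  have hT : ∀ x, (fun n : {n : Fin (D + 1) → ℕ // ∀ i, 1 ≤ n i} =>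
      ((∑ h, n.1 h).factorial : ℝ) *
        ∏ h, (l * p h) ^ n.1 h *
          (Fin.cons (α := fun _ => ℝ) (t - ∑ i, x i) x h) ^ (n.1 h - 1) /
          (((n.1 h - 1).factorial : ℝ) * ((n.1 h).factorial : ℝ))) ∘ (shiftE (D+1)) =
      fun m => TT D t l p m x := fun x => rfl
  have hF' : ∀ x, F x = ∑' m, TT D t l p m x := by
    intro x
    rw [hF x, ← (shiftE (D+1)).tsum_eq, ← hT x]
    rfl
  refine ⟨fun x hx => ?_, fun x hx => ?_, ?_⟩
  · rw [← (shiftE (D+1)).summable_iff, hT x]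
    exact TT_summable D t l hl p hp x hx
  · rw [hF']
    exact tsum_nonneg fun m => TT_nonneg D t l hl p hp m x hx
  · change ∫ x in OpenSx D t, F x = _
    simp_rw [hF']
    have hc := coef_hasSum D t l ht hl p hp
    have h := hasSum_integral_of_summable_integral_norm
      (μ := volume.restrict (OpenSx D t)) (F := fun m x => TT D t l p m x)
      (fun m => TT_integrable D t l ht hl p hp m) (by
        refine hc.summable.congr fun m => ?_
        rw [← TT_integral D t l ht hl p hp]
        refine setIntegral_congr_fun (OpenSx_meas D t) fun x hx => ?_
        exact (Real.norm_of_nonneg (TT_nonneg D t l hl p hp m x hx)).symm)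
    refine h.unique ?_
    convert! hc using 2 with m
    exact TT_integral D t l ht hl p hp m
end

section
/- Let D ≥ 1 be an integer, λ > 0, and p_0, …, p_D > 0 reals with p_0 + ⋯ + p_D = 1. On the open set U = {(x_1,…,x_D,t) ∈ ℝ^{D+1} : x_i > 0 for all i, x_1 + ⋯ + x_D < t}, writing x_0 = t − (x_1 + ⋯ + x_D), define p(x,t) = (e^{−λt}/λ) Σ_{(n_0,…,n_D)} (n_0+⋯+n_D)! ∏_{h=0}^{D} (λ p_h)^{n_h} x_h^{n_h−1} / ((n_h−1)! n_h!), the sum ranging over all (D+1)-tuples of positive integers n_0,…,n_D ≥ 1. Then p is infinitely differentiable on U and satisfies on U the D+1-st order partial differential equation Σ_{k=0}^{D} Σ_{I} Σ_{h=0}^{D+1−k} λ^{D+1−(h+k)} [ C(D+1−k, h) − ( p_0 + Σ_{j ∈ {1,…,D}\setminus I} p_j ) C(D−k, h) ] ∂^{h+k} p / (∂t^{h} ∂x_{i_1} ⋯ ∂x_{i_k}) = 0, where for each k the middle sum ranges over all subsets I = {i_1 < ⋯ < i_k} ⊆ {1,…,D} of cardinality k (for k = 0, I is empty and no x-derivatives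 are taken), ∂^{h+k} p / (∂t^{h} ∂x_{i_1} ⋯ ∂x_{i_k}) denotes the iterated partial derivative of p taken h times in t and once in each variable x_{i_1},…,x_{i_k}, and C(a,b) is the binomial coefficient. -/
/-- Directional derivative operator in direction `v`. -/
noncomputable def dirDeriv {E : Type*} [NormedAddCommGroup E] [NormedSpace ℝ E]
    (v : E) (f : E → ℝ) : E → ℝ :=
  fun z => fderiv ℝ f z v

/-- The iterated partial derivative `∂^{h+k} f / ∂t^h ∂x_{i₁} ⋯ ∂x_{i_k}` of a function
`f : ℝ^D × ℝ → ℝ` (first component the space variables `x`, second the time `t`),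
taken once in each variable `x_i`, `i ∈ I`, and `h` times in `t`. -/
noncomputable def mixedDeriv {D : ℕ} (h : ℕ) (I : Finset (Fin D))
    (f : ((Fin D → ℝ) × ℝ) → ℝ) : ((Fin D → ℝ) × ℝ) → ℝ :=
  (dirDeriv ((0 : Fin D → ℝ), (1 : ℝ)))^[h]
    ((I.sort (· ≤ ·)).foldr (fun i g => dirDeriv (Pi.single i (1 : ℝ), (0 : ℝ)) g) f)

section series
open Finset

noncomputable def psF {N : ℕ} (c : (Fin N →₀ ℕ) → ℝ) (y : Fin N → ℝ) : ℝ :=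
  ∑' m : Fin N →₀ ℕ, c m * ∏ i, (y i ^ m i / ((m i).factorial : ℝ))

def Adm {N : ℕ} (R : ℝ) (c : (Fin N →₀ ℕ) → ℝ) : Prop :=
  ∃ C : ℝ, ∀ m, |c m| ≤ C * ∏ i, R ^ m i

lemma summable_expProd {N : ℕ} (r : ℝ) (hr : 0 ≤ r) :
    Summable fun m : Fin N →₀ ℕ => ∏ i, (r ^ m i / ((m i).factorial : ℝ)) := by
  rw [← Finsupp.equivFunOnFinite.symm.summable_iff]
  apply summable_of_sum_le (c := ∏ _i : Fin N, Real.exp r)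
  · intro m; exact Finset.prod_nonneg fun i _ => by positivity
  · intro s
    let K : Finset ℕ := s.biUnion fun m => Finset.univ.image m
    calc _ ≤ ∑ m ∈ Fintype.piFinset (fun _ : Fin N => K), ∏ i, (r ^ m i / ((m i).factorial : ℝ)) := by
          apply Finset.sum_le_sum_of_subset_of_nonneg
          · intro m hm
            rw [Fintype.mem_piFinset]
            intro i
            exact Finset.mem_biUnion.2 ⟨m, hm, Finset.mem_image_of_mem _ (Finset.mem_univ i)⟩
          · intro m _ _; exact Finset.prod_nonneg fun i _ => by positivity
      _ = ∏ _i : Fin N, ∑ k ∈ K, (r ^ k / (k.factorial : ℝ)) := by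
          rw [Finset.prod_univ_sum]
      _ ≤ _ := by
          apply Finset.prod_le_prod
          · intro i _; exact Finset.sum_nonneg fun i _ => by positivity
          · intro i _
            rw [Real.exp_eq_exp_ℝ, NormedSpace.exp_eq_tsum_div]
            exact (Real.summable_pow_div_factorial r).sum_le_tsum _ (fun k _ => by positivity)

lemma summable_psF {N : ℕ} {R : ℝ} (hR : 0 ≤ R) {c : (Fin N →₀ ℕ) → ℝ} (hc : Adm R c) (y : Fin N → ℝ) :
    Summable fun m : Fin N →₀ ℕ => c m * ∏ i, (y i ^ m i / ((m i).factorial : ℝ)) := by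
  obtain ⟨C, hC⟩ := hc
  refine Summable.of_norm_bounded (((summable_expProd (N := N) (R * ‖y‖) (by positivity))).mul_left C) ?_
  intro m
  rw [norm_mul, Real.norm_eq_abs, norm_prod]
  have : ∏ i, (R * ‖y‖) ^ m i / ((m i).factorial : ℝ) = (∏ i, R ^ m i) * ∏ i, (‖y‖ ^ m i / ((m i).factorial : ℝ)) := by
    rw [← Finset.prod_mul_distrib]
    exact Finset.prod_congr rfl fun i _ => by rw [mul_pow]; ring
  rw [this, ← mul_assoc]
  apply mul_le_mul (hC m) _ (Finset.prod_nonneg fun i _ => by positivity) ((abs_nonneg _).trans (hC m))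
  apply Finset.prod_le_prod (fun i _ => by positivity)
  intro i _
  rw [norm_div, norm_pow, RCLike.norm_natCast]
  gcongr
  exact norm_le_pi_norm y i

noncomputable def psD {N : ℕ} (c : (Fin N →₀ ℕ) → ℝ) (m : Fin N →₀ ℕ) (y : Fin N → ℝ) (j : Fin N) : ℝ :=
  c m * ((∏ i ∈ Finset.univ.erase j, (y i ^ m i / ((m i).factorial : ℝ))) *
    (m j * y j ^ (m j - 1) / ((m j).factorial : ℝ)))

lemma psD_bound {N : ℕ} {R C : ℝ} {c : (Fin N →₀ ℕ) → ℝ}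
    (hC : ∀ m, |c m| ≤ C * ∏ i, R ^ m i) (r : ℝ) (hr : 1 ≤ r) (y : Fin N → ℝ) (hy : ‖y‖ ≤ r) (m) (j : Fin N) :
    ‖psD c m y j‖ ≤ C * ∏ i, ((R * (2 * r)) ^ m i / ((m i).factorial : ℝ)) := by
  have : ∏ i, (R * (2 * r)) ^ m i / ((m i).factorial : ℝ) = (∏ i, R ^ m i) * ∏ i, ((2 * r) ^ m i / ((m i).factorial : ℝ)) := by
    rw [← Finset.prod_mul_distrib]
    exact Finset.prod_congr rfl fun i _ => by rw [mul_pow]; ring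
  rw [psD, norm_mul, Real.norm_eq_abs, norm_mul, norm_prod, this, ← mul_assoc C]
  have hyi : ∀ i, ‖y i‖ ≤ r := fun i => (norm_le_pi_norm y i).trans hy
  apply mul_le_mul (hC m) _ (by positivity) ((abs_nonneg _).trans (hC m))
  rw [← Finset.prod_erase_mul _ _ (Finset.mem_univ j)]
  apply mul_le_mul
  · apply Finset.prod_le_prod (fun i _ => by positivity)
    intro i _
    rw [norm_div, norm_pow, RCLike.norm_natCast]
    gcongr
    linarith [hyi i]
  · rw [norm_div, norm_mul, norm_pow, RCLike.norm_natCast, RCLike.norm_natCast, mul_pow]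
    gcongr
    · exact_mod_cast (Nat.lt_two_pow_self).le
    · calc ‖y j‖ ^ (m j - 1) ≤ r ^ (m j - 1) := by gcongr; exact hyi j
        _ ≤ r ^ m j := pow_le_pow_right₀ hr (Nat.sub_le _ _)
  · positivity
  · exact Finset.prod_nonneg fun i _ => by positivity

lemma hasFDerivAt_psF {N : ℕ} {R : ℝ} (hR : 0 ≤ R) {c : (Fin N →₀ ℕ) → ℝ} (hc : Adm R c) (y : Fin N → ℝ) :
    HasFDerivAt (psF c) (∑ j, psF (fun m => c (m + Finsupp.single j 1)) y •
      (ContinuousLinearMap.proj j : (Fin N → ℝ) →L[ℝ] ℝ)) y := by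
  have hsum := fun y => summable_psF hR hc y
  obtain ⟨C, hC⟩ := hc
  set r := ‖y‖ + 1 with hr
  have hr1 : 1 ≤ r := by simp [hr]
  have hS := (summable_expProd (N := N) (R * (2 * r)) (by positivity)).mul_left C
  have key := hasFDerivAt_tsum_of_isPreconnected (𝕜 := ℝ)
    (f := fun m y => c m * ∏ i, (y i ^ m i / ((m i).factorial : ℝ)))
    (f' := fun m y => ∑ j, psD c m y j • (ContinuousLinearMap.proj j : (Fin N → ℝ) →L[ℝ] ℝ))
    (u := fun m => ∑ _j : Fin N, (C * ∏ i, ((R * (2 * r)) ^ m i / ((m i).factorial : ℝ))))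
    (s := Metric.ball 0 r) (x₀ := y) (x := y) (summable_sum fun _ _ => hS)
    Metric.isOpen_ball (convex_ball 0 r).isPreconnected ?_ ?_ (by simp [hr]) (hsum y) (by simp [hr])
  · refine key.congr_fderiv ?_
    have h1 : ∀ j, HasSum (fun m => psD c m y j) (psF (fun m => c (m + Finsupp.single j 1)) y) := by
      intro j
      have hs : Summable fun m => psD c m y j := 
        Summable.of_norm_bounded hS fun m => psD_bound hC r hr1 y (by simp [hr]) m j
      convert hs.hasSum using 1
      have hinj : Function.Injective (fun m : Fin N →₀ ℕ => m + Finsupp.single j 1) := 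
        add_left_injective _
      rw [← hinj.tsum_eq]
      · unfold psF
        congr 1; ext m
        rw [psD, ← Finset.prod_erase_mul _ _ (Finset.mem_univ j)]
        congr 2
        · apply Finset.prod_congr rfl
          intro i hi
          have : i ≠ j := Finset.ne_of_mem_erase hi
          simp [this.symm]
        · simp [Nat.factorial_succ]
          field_simp
      · intro m hm
        have : m j ≠ 0 := by
          intro h0
          apply hm
          simp [psD, h0]
        refine ⟨m - Finsupp.single j 1, ?_⟩
        ext i
        by_cases hij : j = i
        · subst hij; simp; omega
        · simp [hij]
    exact (hasSum_sum fun j _ => (h1 j).smul_const (ContinuousLinearMap.proj j : (Fin N → ℝ) →L[ℝ] ℝ)).tsum_eq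
  · intro m z hz
    have h1 : ∀ i ∈ Finset.univ, HasFDerivAt (fun y : Fin N → ℝ => y i ^ m i / ((m i).factorial : ℝ))
        ((m i * z i ^ (m i - 1) / ((m i).factorial : ℝ)) • (ContinuousLinearMap.proj i : (Fin N → ℝ) →L[ℝ] ℝ)) z := by
      intro i _
      have h2 : HasDerivAt (fun t : ℝ => t ^ m i / ((m i).factorial : ℝ)) (m i * z i ^ (m i - 1) / ((m i).factorial : ℝ)) (z i) :=
        (hasDerivAt_pow _ _).div_const _
      exact h2.comp_hasFDerivAt z (ContinuousLinearMap.proj (R := ℝ) (φ := fun _ : Fin N => ℝ) i).hasFDerivAt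
    have h3 := (HasFDerivAt.finsetProd h1).const_mul (c m)
    refine h3.congr_fderiv ?_
    rw [Finset.smul_sum]
    apply Finset.sum_congr rfl
    intro j _
    rw [psD, smul_smul, smul_smul, mul_assoc]
  · intro m z hz
    refine (norm_sum_le _ _).trans (Finset.sum_le_sum fun j _ => ?_)
    rw [norm_smul]
    refine le_trans (mul_le_of_le_one_right (norm_nonneg _) ?_) 
      (psD_bound hC r hr1 z (by simpa using (le_of_lt (mem_ball_zero_iff.1 hz))) m j)
    refine ContinuousLinearMap.opNorm_le_bound _ zero_le_one fun v => ?_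
    simpa using norm_le_pi_norm v j

lemma Adm.shift {N : ℕ} {R : ℝ} {c : (Fin N →₀ ℕ) → ℝ} (hc : Adm R c) (k : Fin N →₀ ℕ) :
    Adm R (fun m => c (m + k)) := by
  obtain ⟨C, hC⟩ := hc
  refine ⟨C * ∏ i, R ^ k i, fun m => (hC _).trans (le_of_eq ?_)⟩
  rw [mul_assoc, ← Finset.prod_mul_distrib]
  congr 1
  exact Finset.prod_congr rfl fun i _ => by rw [← pow_add, add_comm]; rfl

lemma contDiff_psF {N : ℕ} {R : ℝ} (hR : 0 ≤ R) (n : ℕ) : ∀ {c : (Fin N →₀ ℕ) → ℝ} (_ : Adm R c),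
    ContDiff ℝ n (psF c) := by
  induction n with
  | zero => 
    intro c hc
    exact contDiff_zero.2 (continuous_iff_continuousAt.2 fun y => (hasFDerivAt_psF hR hc y).continuousAt)
  | succ n ih =>
    intro c hc
    push_cast
    rw [contDiff_succ_iff_hasFDerivAt]
    exact ⟨_, ContDiff.sum fun j _ => (ih (hc.shift _)).smul contDiff_const, fun y => hasFDerivAt_psF hR hc y⟩

end series

section poly
open MvPolynomial

lemma poly_identity (D : ℕ) (l : ℝ) (p : Fin (D + 1) → ℝ) {A : Type*} [CommRing A] [Algebra ℝ A]
    (X : Fin (D + 1) → A) :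
    ∑ k ∈ Finset.range (D + 1),
        ∑ I ∈ Finset.powersetCard k (Finset.univ : Finset (Fin D)),
          ∑ h ∈ Finset.range (D + 2 - k),
            (l ^ (D + 1 - (h + k)) *
              (((D + 1 - k).choose h : ℝ) -
                (p 0 + ∑ jj ∈ Finset.univ \ I, p jj.succ) * ((D - k).choose h : ℝ))) •
              ((X 0 - algebraMap ℝ A l) ^ h * ∏ i ∈ I, (X i.succ - X 0)) =
    ∏ h, X h - l • ∑ j, p j • ∏ i ∈ Finset.univ.erase j, X i := by
  have hT : ∀ n : ℕ, ∑ h ∈ Finset.range (n + 1), (l ^ (n - h) * (n.choose h : ℝ)) • (X 0 - algebraMap ℝ A l) ^ h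
      = X 0 ^ n := by
    intro n
    have := (add_pow (X 0 - algebraMap ℝ A l) (algebraMap ℝ A l) n).symm
    rw [sub_add_cancel] at this
    rw [← this]
    apply Finset.sum_congr rfl
    intro h _
    rw [Algebra.smul_def, map_mul, map_pow, map_natCast]
    ring
  have hinner : ∀ k ∈ Finset.range (D + 1), ∀ I ∈ Finset.powersetCard k (Finset.univ : Finset (Fin D)),
      ∑ h ∈ Finset.range (D + 2 - k),
            (l ^ (D + 1 - (h + k)) *
              (((D + 1 - k).choose h : ℝ) -
                (p 0 + ∑ jj ∈ Finset.univ \ I, p jj.succ) * ((D - k).choose h : ℝ))) •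
              ((X 0 - algebraMap ℝ A l) ^ h * ∏ i ∈ I, (X i.succ - X 0)) =
      X 0 * ((∏ i ∈ I, (X i.succ - X 0)) * ∏ i ∈ Finset.univ \ I, X 0)
       - (l * p 0) • ((∏ i ∈ I, (X i.succ - X 0)) * ∏ i ∈ Finset.univ \ I, X 0) 
       - ∑ j : Fin D, if j ∈ I then 0 else
         (l * p j.succ) • (X 0 * ((∏ i ∈ I, (X i.succ - X 0)) * ∏ i ∈ (Finset.univ.erase j) \ I, X 0)) := by
    intro k hk I hI
    have hk' : k ≤ D := Nat.lt_succ_iff.1 (Finset.mem_range.1 hk)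
    have hcard : I.card = k := (Finset.mem_powersetCard.1 hI).2
    obtain ⟨n, rfl⟩ := Nat.exists_eq_add_of_le hk'
    have hc : (Finset.univ \ I).card = n := by
      rw [Finset.card_sdiff_of_subset (Finset.subset_univ I), Finset.card_fin, hcard]; omega
    have e1 : k + n + 2 - k = n + 1 + 1 := by omega
    have e2 : k + n + 1 - k = n + 1 := by omega
    have e3 : k + n - k = n := by omega
    have e4 : ∀ h, k + n + 1 - (h + k) = n + 1 - h := by intro h; omega
    simp only [e1, e2, e3, e4]
    have hX : ∏ i ∈ Finset.univ \ I, X 0 = X 0 ^ n := by rw [Finset.prod_const, hc]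
    have hj : ∀ j : Fin (k + n), (if j ∈ I then 0 else
         (l * p j.succ) • (X 0 * ((∏ i ∈ I, (X i.succ - X 0)) * ∏ i ∈ (Finset.univ.erase j) \ I, X 0))) =
         (if j ∈ Finset.univ \ I then (l * p j.succ) • ((∏ i ∈ I, (X i.succ - X 0)) * X 0 ^ n) else 0) := by
      intro j
      by_cases hjI : j ∈ I
      · simp [hjI]
      · have hj' : j ∈ Finset.univ \ I := by simp [hjI]
        rw [if_neg hjI, if_pos hj', ← hX, ← Finset.mul_prod_erase _ _ hj', Finset.erase_sdiff_comm]
        congr 1; ring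
    rw [Finset.sum_congr rfl fun j _ => hj j, Finset.sum_ite_mem, Finset.univ_inter, ← Finset.sum_smul, hX,
      ← Finset.mul_sum]
    set Q := ∏ i ∈ I, (X i.succ - X 0)
    set s := ∑ jj ∈ Finset.univ \ I, p jj.succ
    have hA : ∑ h ∈ Finset.range (n + 1 + 1), (l ^ (n + 1 - h) * ((n.choose h : ℕ) : ℝ)) • (X 0 - algebraMap ℝ A l) ^ h
        = l • X 0 ^ n := by
      rw [Finset.sum_range_succ, Nat.choose_succ_self, Nat.cast_zero, mul_zero, zero_smul, add_zero,
        ← hT n, Finset.smul_sum]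
      apply Finset.sum_congr rfl
      intro h hh
      rw [smul_smul, Nat.succ_sub (Nat.lt_succ_iff.1 (Finset.mem_range.1 hh)), pow_succ']
      congr 1; ring
    calc _ = (∑ h ∈ Finset.range (n + 1 + 1), (l ^ (n + 1 - h) * (((n + 1).choose h : ℕ) : ℝ)) • (X 0 - algebraMap ℝ A l) ^ h) * Q
        - (p 0 + s) • ((∑ h ∈ Finset.range (n + 1 + 1), (l ^ (n + 1 - h) * ((n.choose h : ℕ) : ℝ)) • (X 0 - algebraMap ℝ A l) ^ h) * Q) := by
          rw [Finset.sum_mul, Finset.sum_mul, Finset.smul_sum, ← Finset.sum_sub_distrib]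
          apply Finset.sum_congr rfl
          intro h _
          simp only [Algebra.smul_def, map_mul, map_sub]
          ring
      _ = _ := by
          rw [hT, hA]
          simp only [Algebra.smul_def, map_mul, map_add]
          ring
  rw [Finset.sum_congr rfl fun k hk => Finset.sum_congr rfl (hinner k hk)]
  have := Finset.sum_powerset (Finset.univ : Finset (Fin D)) (fun I => X 0 * ((∏ i ∈ I, (X i.succ - X 0)) * ∏ i ∈ Finset.univ \ I, X 0)
       - (l * p 0) • ((∏ i ∈ I, (X i.succ - X 0)) * ∏ i ∈ Finset.univ \ I, X 0) 
       - ∑ j : Fin D, if j ∈ I then 0 else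
         (l * p j.succ) • (X 0 * ((∏ i ∈ I, (X i.succ - X 0)) * ∏ i ∈ (Finset.univ.erase j) \ I, X 0)))
  rw [Finset.card_fin] at this
  rw [← this, Finset.sum_sub_distrib, Finset.sum_sub_distrib, ← Finset.mul_sum, ← Finset.smul_sum,
    ← Finset.prod_add, Finset.sum_comm]
  have h2 : ∀ j : Fin D, ∑ I ∈ (Finset.univ : Finset (Fin D)).powerset, (if j ∈ I then 0 else
         (l * p j.succ) • (X 0 * ((∏ i ∈ I, (X i.succ - X 0)) * ∏ i ∈ (Finset.univ.erase j) \ I, X 0))) 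
      = (l * p j.succ) • (X 0 * ∏ i ∈ Finset.univ.erase j, X i.succ) := by
    intro j
    have h3 := Finset.prod_add (fun i : Fin D => X i.succ - X 0) (fun _ => X 0) (Finset.univ.erase j)
    simp only [sub_add_cancel] at h3
    rw [h3, Finset.mul_sum, Finset.smul_sum, ← Finset.sum_filter_add_sum_filter_not _ (fun I => j ∈ I)]
    rw [Finset.sum_eq_zero, zero_add]
    · apply Finset.sum_congr
      · ext I
        simp [Finset.subset_erase]
      · intro I hI
        rw [if_neg]
        intro hj
        simpa using Finset.mem_powerset.1 hI hj
    · intro I hI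
      rw [if_pos (Finset.mem_filter.1 hI).2]
  rw [Finset.sum_congr rfl fun j _ => h2 j]
  simp only [sub_add_cancel]
  rw [Fin.prod_univ_succ, Fin.sum_univ_succ, smul_add, smul_smul, Finset.smul_sum]
  have h4 : ∏ i ∈ Finset.univ.erase (0 : Fin (D+1)), X i = ∏ i : Fin D, X i.succ := by
    rw [Fin.univ_succ, Finset.erase_cons, Finset.prod_map]; rfl
  have h5 : ∀ j : Fin D, ∏ i ∈ Finset.univ.erase j.succ, X i = X 0 * ∏ i ∈ Finset.univ.erase j, X i.succ := by
    intro j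
    have : (Finset.univ : Finset (Fin (D+1))).erase j.succ = Finset.cons 0 ((Finset.univ.erase j).map (Fin.succEmb D)) (by simp) := by
      ext i
      refine Fin.cases ?_ (fun i => ?_) i
      · simp [Fin.succ_ne_zero, eq_comm]
      · simp [Fin.succ_ne_zero]
    rw [this, Finset.prod_cons, Finset.prod_map]; rfl
  have h2' : ∀ j : Fin D, l • p j.succ • ∏ i ∈ Finset.univ.erase j.succ, X i =
      (l * p j.succ) • (X 0 * ∏ i ∈ Finset.univ.erase j, X i.succ) := fun j => by rw [h5 j, smul_smul]
  rw [h4, Finset.sum_congr rfl fun j _ => (h2' j).symm, sub_sub]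

lemma adm_poly {N : ℕ} {R : ℝ} {c : (Fin N →₀ ℕ) → ℝ} (hc : Adm R c)
    (L : MvPolynomial (Fin N) ℝ →ₗ[ℝ] ℝ) (hL : ∀ m, L (monomial m 1) = c m) (q : MvPolynomial (Fin N) ℝ) :
    Adm R (fun m => L (q * monomial m 1)) := by
  induction q using MvPolynomial.induction_on' with
  | monomial u a =>
    obtain ⟨C, hC⟩ := hc.shift u
    refine ⟨|a| * C, fun m => ?_⟩
    beta_reduce
    have : monomial u a * monomial m 1 = a • monomial (m + u) (1:ℝ) := by
      rw [monomial_mul, smul_monomial, add_comm]; simp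
    rw [this, map_smul, hL, smul_eq_mul, abs_mul, mul_assoc]
    exact mul_le_mul_of_nonneg_left (hC m) (abs_nonneg _)
  | add p q hp hq =>
    obtain ⟨C, hC⟩ := hp
    obtain ⟨C', hC'⟩ := hq
    refine ⟨C + C', fun m => ?_⟩
    beta_reduce
    rw [add_mul, map_add, add_mul]
    exact (abs_add_le _ _).trans (add_le_add (hC m) (hC' m))

/-- The linear change of variables `(x,t) ↦ (t - ∑ x, x)`. -/
noncomputable def chY (D : ℕ) : ((Fin D → ℝ) × ℝ) →L[ℝ] (Fin (D + 1) → ℝ) :=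
  LinearMap.toContinuousLinearMap
    { toFun := fun z => Fin.cons (α := fun _ => ℝ) (z.2 - ∑ i, z.1 i) z.1
      map_add' := by
        intro z w; ext i
        refine Fin.cases ?_ (fun i => ?_) i
        · simp [Finset.sum_add_distrib]; ring
        · simp
      map_smul' := by
        intro a z; ext i
        refine Fin.cases ?_ (fun i => ?_) i
        · simp [← Finset.mul_sum]; ring
        · simp }

lemma chY_apply {D : ℕ} (z) : chY D z = Fin.cons (α := fun _ => ℝ) (z.2 - ∑ i, z.1 i) z.1 := rfl

noncomputable def Phi {D : ℕ} (l : ℝ) (L : MvPolynomial (Fin (D+1)) ℝ →ₗ[ℝ] ℝ) (q : MvPolynomial (Fin (D+1)) ℝ) 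
    (z : (Fin D → ℝ) × ℝ) : ℝ :=
  (Real.exp (-(l * z.2)) / l) * psF (fun m => L (q * monomial m 1)) (chY D z)

variable {D : ℕ} {l R : ℝ} {L : MvPolynomial (Fin (D+1)) ℝ →ₗ[ℝ] ℝ}

lemma Phi_add (hR : 0 ≤ R) (hL : ∀ q, Adm R (fun m => L (q * monomial m 1))) (q q') (z) :
    Phi l L (q + q') z = Phi l L q z + Phi l L q' z := by
  rw [Phi, Phi, Phi, ← mul_add]
  congr 1
  rw [psF, psF, psF, ← (summable_psF hR (hL q) _).tsum_add (summable_psF hR (hL q') _)]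
  congr 1; ext m
  rw [add_mul, map_add, add_mul]

lemma Phi_smul (a : ℝ) (q) (z) :
    Phi l L (a • q) z = a * Phi l L q z := by
  rw [Phi, Phi, mul_left_comm]
  congr 1
  rw [psF, psF, ← tsum_mul_left]
  congr 1; ext m
  rw [smul_mul_assoc, map_smul, smul_eq_mul, mul_assoc]

lemma Phi_zero (z) : Phi l L 0 z = 0 := by
  simp [Phi, psF]

lemma Phi_sum (hR : 0 ≤ R) (hL : ∀ q, Adm R (fun m => L (q * monomial m 1))) {ι : Type*} (s : Finset ι)
    (f : ι → MvPolynomial (Fin (D+1)) ℝ) (z) :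
    Phi l L (∑ i ∈ s, f i) z = ∑ i ∈ s, Phi l L (f i) z := by
  classical
  induction s using Finset.induction_on with
  | empty => simp [Phi_zero]
  | insert a s ha ih => rw [Finset.sum_insert ha, Finset.sum_insert ha, Phi_add hR hL, ih]

lemma contDiff_Phi (hR : 0 ≤ R) (hL : ∀ q, Adm R (fun m => L (q * monomial m 1))) (q) :
    ContDiff ℝ (⊤ : ℕ∞) (Phi l L q) := by
  have h : ContDiff ℝ (⊤ : ℕ∞) (psF (fun m => L (q * monomial m 1))) := 
    contDiff_infty.2 fun n => contDiff_psF hR n (hL q)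
  unfold Phi
  exact ((Real.contDiff_exp.comp (contDiff_const.mul contDiff_snd).neg).div_const _).mul (h.comp (chY D).contDiff)

lemma fderiv_Phi (hR : 0 ≤ R) (hL : ∀ q, Adm R (fun m => L (q * monomial m 1))) (q) (v) :
    dirDeriv v (Phi l L q) = Phi l L ((∑ j, chY D v j • X j - C (l * v.2)) * q) := by
  ext z
  have h1 : HasFDerivAt (fun z : (Fin D → ℝ) × ℝ => Real.exp (-(l * z.2)) / l) 
      ((Real.exp (-(l * z.2)) / l * (-l)) • ContinuousLinearMap.snd ℝ (Fin D → ℝ) ℝ) z := by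
    have h2 : HasDerivAt (fun t : ℝ => Real.exp (-(l * t)) / l) (Real.exp (-(l * z.2)) / l * (-l)) z.2 := by
      have h0 : HasDerivAt (fun t : ℝ => -(l * t)) (-l) z.2 := by
        simpa using ((hasDerivAt_id' z.2).const_mul l).fun_neg
      exact (h0.exp.div_const l).congr_deriv (by ring)
    exact h2.comp_hasFDerivAt z (ContinuousLinearMap.snd ℝ (Fin D → ℝ) ℝ).hasFDerivAt
  have h3 := (hasFDerivAt_psF hR (hL q) (chY D z)).comp z (chY D).hasFDerivAt
  have h4 := h1.mul h3
  have h5 : dirDeriv v (Phi l L q) z = _ := congrArg (fun T : ((Fin D → ℝ) × ℝ) →L[ℝ] ℝ => T v) (h4.fderiv)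
  rw [h5, sub_mul, sub_eq_add_neg, Phi_add hR hL, Finset.sum_mul, Phi_sum hR hL]
  have h6 : -(C (l * v.2) * q) = (-(l * v.2)) • q := by
    rw [neg_smul, MvPolynomial.smul_eq_C_mul]
  have h7 : ∀ j, psF (fun m => L (q * monomial (m + Finsupp.single j 1) 1)) = psF (fun m => L ((X j * q) * monomial m 1)) := by
    intro j
    congr 1; ext m
    congr 1
    rw [← mul_one (1:ℝ), ← monomial_mul, mul_one]
    simp only [X]; ring
  rw [h6, Phi_smul]
  simp only [smul_mul_assoc, Phi_smul]
  simp only [h7, Phi]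
  simp [Finset.mul_sum]
  congr 1
  · exact Finset.sum_congr rfl fun j _ => by ring
  · ring

lemma mixed_Phi (hR : 0 ≤ R) (hL : ∀ q, Adm R (fun m => L (q * monomial m 1))) (h : ℕ) (I : Finset (Fin D)) :
    mixedDeriv h I (Phi l L 1) = Phi l L ((X 0 - algebraMap ℝ _ l) ^ h * ∏ i ∈ I, (X i.succ - X 0)) := by
  have ht : ∀ q, dirDeriv ((0 : Fin D → ℝ), (1 : ℝ)) (Phi l L q) = Phi l L ((X 0 - algebraMap ℝ _ l) * q) := by
    intro q
    rw [fderiv_Phi hR hL]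
    congr 2
    simp [chY_apply, Fin.sum_univ_succ, MvPolynomial.algebraMap_eq]
  have hx : ∀ i q, dirDeriv (Pi.single i (1 : ℝ), (0 : ℝ)) (Phi l L q) = Phi l L ((X i.succ - X 0) * q) := by
    intro i q
    rw [fderiv_Phi hR hL]
    congr 2
    simp [chY_apply, Fin.sum_univ_succ, Pi.single_apply, ite_smul]
    ring
  have hl : ∀ s : List (Fin D), s.foldr (fun i g => dirDeriv (Pi.single i (1 : ℝ), (0 : ℝ)) g) (Phi l L 1)
      = Phi l L ((s.map fun i => (X i.succ - X 0)).prod) := by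
    intro s
    induction s with
    | nil => simp
    | cons a s ih => rw [List.foldr_cons, ih, hx, List.map_cons, List.prod_cons]
  have hI : ((I.sort (· ≤ ·)).map fun i => (X i.succ - X 0 : MvPolynomial (Fin (D+1)) ℝ)).prod = ∏ i ∈ I, (X i.succ - X 0) := by
    rw [← Multiset.prod_coe, ← Multiset.map_coe, Finset.sort_eq]; rfl
  rw [mixedDeriv, hl, hI]
  induction h with
  | zero => simp
  | succ h ih => rw [Function.iterate_succ_apply', ih, ht, pow_succ', mul_assoc]

end poly

section coeffs
open MvPolynomial

noncomputable def cf {N : ℕ} (l : ℝ) (p : Fin N → ℝ) (m : Fin N →₀ ℕ) : ℝ :=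
  ((∑ h, (m h + 1)).factorial : ℝ) * ∏ h, ((l * p h) ^ (m h + 1) / ((m h + 1).factorial : ℝ))

lemma adm_cf {N : ℕ} (l : ℝ) (hl : 0 < l) (p : Fin N → ℝ) (hp : ∀ h, 0 < p h) (hpsum : ∑ h, p h = 1) :
    Adm l (cf l p) := by
  refine ⟨l ^ N, fun m => ?_⟩
  have hlp : ∀ h, 0 < l * p h := fun h => mul_pos hl (hp h)
  have hpos : 0 ≤ cf l p m := by
    unfold cf
    exact mul_nonneg (by positivity) (Finset.prod_nonneg fun h _ => by have := hlp h; positivity)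
  rw [abs_of_nonneg hpos]
  have h1 := Finset.sum_pow_eq_sum_piAntidiag Finset.univ (fun h => l * p h) (∑ h, (m h + 1))
  rw [← Finset.mul_sum, hpsum, mul_one] at h1
  have h2 : l ^ N * ∏ i, l ^ m i = l ^ (∑ h, (m h + 1)) := by
    rw [Finset.prod_pow_eq_pow_sum, Finset.sum_add_distrib]
    simp [pow_add, mul_comm]
  rw [h2, h1]
  have h3 : cf l p m = (Nat.multinomial Finset.univ (fun h => m h + 1) : ℝ) * ∏ h, (l * p h) ^ (m h + 1) := by
    rw [cf, ← Nat.multinomial_spec, Finset.prod_div_distrib]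
    push_cast
    have : (∏ h, ((m h + 1).factorial : ℝ)) ≠ 0 := Finset.prod_ne_zero_iff.2 fun h _ => by positivity
    field_simp
  rw [h3]
  refine Finset.single_le_sum (f := fun k : Fin N → ℕ => (Nat.multinomial Finset.univ k : ℝ) * ∏ h, (l * p h) ^ k h)
    (fun k _ => mul_nonneg (by positivity) (Finset.prod_nonneg fun h _ => by have := hlp h; positivity)) ?_
  simp [Finset.mem_piAntidiag]

lemma cf_rec {N : ℕ} (l : ℝ) (p : Fin N → ℝ) (L : MvPolynomial (Fin N) ℝ →ₗ[ℝ] ℝ)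
    (hN : 1 ≤ N)
    (hL : ∀ m, L (monomial m 1) = cf l p m) (m : Fin N →₀ ℕ) :
    L ((∏ h, X h - l • ∑ j, p j • ∏ i ∈ Finset.univ.erase j, X i) * monomial m 1) = 0 := by
  have hX : ∀ s : Finset (Fin N), (∏ i ∈ s, X i : MvPolynomial (Fin N) ℝ) * monomial m 1 =
      monomial (∑ i ∈ s, Finsupp.single i 1 + m) 1 := by
    intro s
    rw [← mul_one (1:ℝ), ← monomial_mul, mul_one, monomial_sum_one]; rfl
  rw [sub_mul, smul_mul_assoc, Finset.sum_mul, map_sub, map_smul, map_sum, hX, hL, smul_eq_mul, sub_eq_zero,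
    Finset.mul_sum]
  have happ : ∀ (s : Finset (Fin N)) (h : Fin N), (∑ i ∈ s, Finsupp.single i 1 + m : Fin N →₀ ℕ) h = (if h ∈ s then 1 else 0) + m h := by
    intro s h
    simp [Finsupp.single_apply]
  set M : ℕ := ∑ h, (m h + 1 + 1) with hM
  set W : ℝ := ∏ h, ((l * p h) ^ (m h + 1 + 1) / ((m h + 1 + 1).factorial : ℝ)) with hW
  have hM0 : 1 ≤ M := by
    have : 0 < M := Finset.sum_pos (fun _ _ => by omega) ⟨⟨0, hN⟩, Finset.mem_univ _⟩
    omega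
  have e1 : cf l p (∑ i, Finsupp.single i 1 + m) = (M.factorial : ℝ) * W := by
    unfold cf
    simp only [happ, Finset.mem_univ, if_true, hM, hW, add_comm 1]
  have e2 : ∀ j, l * L (p j • (∏ i ∈ Finset.univ.erase j, X i : MvPolynomial (Fin N) ℝ) * monomial m 1) =
      ((M - 1).factorial : ℝ) * W * (m j + 1 + 1 : ℕ) := by
    intro j
    rw [smul_mul_assoc, map_smul, hX, hL, smul_eq_mul]
    unfold cf
    have hs : ∑ h, ((∑ i ∈ Finset.univ.erase j, Finsupp.single i 1 + m : Fin N →₀ ℕ) h + 1) = M - 1 := by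
      rw [hM, ← Finset.sum_erase_add _ _ (Finset.mem_univ j), ← Finset.sum_erase_add _ _ (Finset.mem_univ j), happ]
      simp only [Finset.mem_erase, ne_eq, not_true, false_and, if_false, zero_add]
      rw [Finset.sum_congr rfl (g := fun h => m h + 1 + 1) (fun h hh => by rw [happ, if_pos hh, add_comm 1])]
      omega
    rw [hs, hW, ← Finset.prod_erase_mul _ _ (Finset.mem_univ j),
      ← Finset.prod_erase_mul (a := j) _ (fun h => (l * p h) ^ (m h + 1 + 1) / ((m h + 1 + 1).factorial : ℝ)) (Finset.mem_univ j), happ]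
    rw [Finset.prod_congr rfl (g := fun h => (l * p h) ^ (m h + 1 + 1) / ((m h + 1 + 1).factorial : ℝ))
      (fun h hh => by rw [happ, if_pos hh, add_comm 1])]
    simp only [Finset.mem_erase, ne_eq, not_true, false_and, if_false, zero_add]
    rw [Nat.factorial_succ (m j + 1)]
    push_cast
    field_simp
    ring
  rw [e1, Finset.sum_congr rfl fun j _ => e2 j, ← Finset.mul_sum, ← Nat.cast_sum, ← hM, ← Nat.mul_factorial_pred (by omega : M ≠ 0)]
  push_cast; ring

end coeffs

theorem stmt18 (D : ℕ) (hD : 1 ≤ D) (l : ℝ) (hl : 0 < l)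
    (p : Fin (D + 1) → ℝ) (hp : ∀ h, 0 < p h) (hpsum : ∑ h, p h = 1)
    (U : Set ((Fin D → ℝ) × ℝ))
    (hU : U = {z : (Fin D → ℝ) × ℝ | (∀ i, 0 < z.1 i) ∧ ∑ i, z.1 i < z.2})
    (P : ((Fin D → ℝ) × ℝ) → ℝ)
    (hP : ∀ z, P z = (Real.exp (-(l * z.2)) / l) *
      ∑' n : {n : Fin (D + 1) → ℕ // ∀ i, 1 ≤ n i},
        ((∑ h, n.1 h).factorial : ℝ) *
          ∏ h, (l * p h) ^ n.1 h *
            (Fin.cons (α := fun _ => ℝ) (z.2 - ∑ i, z.1 i) z.1 h) ^ (n.1 h - 1) /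
            (((n.1 h - 1).factorial : ℝ) * ((n.1 h).factorial : ℝ))) :
    ContDiffOn ℝ (⊤ : ℕ∞) P U ∧
    ∀ z ∈ U,
      ∑ k ∈ Finset.range (D + 1),
        ∑ I ∈ Finset.powersetCard k (Finset.univ : Finset (Fin D)),
          ∑ h ∈ Finset.range (D + 2 - k),
            l ^ (D + 1 - (h + k)) *
              (((D + 1 - k).choose h : ℝ) -
                (p 0 + ∑ jj ∈ Finset.univ \ I, p jj.succ) * ((D - k).choose h : ℝ)) *
              mixedDeriv h I P z = 0 := by
  have hl0 := hl.le
  let L : MvPolynomial (Fin (D+1)) ℝ →ₗ[ℝ] ℝ := (MvPolynomial.basisMonomials (Fin (D+1)) ℝ).constr ℝ (cf l p)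
  have hLm : ∀ m, L (MvPolynomial.monomial m 1) = cf l p m := by
    intro m
    have := (MvPolynomial.basisMonomials (Fin (D+1)) ℝ).constr_basis ℝ (cf l p) m
    rwa [MvPolynomial.coe_basisMonomials] at this
  have hA : ∀ q, Adm l (fun m => L (q * MvPolynomial.monomial m 1)) := 
    adm_poly (adm_cf l hl p hp hpsum) L hLm
  have hPP : P = Phi l L 1 := by
    ext z
    rw [hP, Phi, psF, chY_apply]
    congr 1
    let e : (Fin (D+1) →₀ ℕ) ≃ {n : Fin (D + 1) → ℕ // ∀ i, 1 ≤ n i} :=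
      { toFun := fun m => ⟨fun i => m i + 1, fun i => Nat.le_add_left 1 _⟩
        invFun := fun n => Finsupp.equivFunOnFinite.symm fun i => n.1 i - 1
        left_inv := fun m => by ext i; simp
        right_inv := fun n => by
          ext i
          have := n.2 i
          simp; omega }
    rw [← e.tsum_eq]
    congr 1; ext m
    rw [one_mul, hLm, cf, mul_assoc, ← Finset.prod_mul_distrib]
    congr 1
    apply Finset.prod_congr rfl
    intro h _
    simp only [e, Equiv.coe_fn_mk, Nat.add_sub_cancel]
    field_simp
  constructor
  · rw [hPP]
    exact (contDiff_Phi hl0 hA 1).contDiffOn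
  · intro z _
    have key := congrArg (fun q => Phi l L q z) (poly_identity D l p (MvPolynomial.X (R := ℝ)))
    have h0 : Phi l L (∏ h, MvPolynomial.X h - l • ∑ j, p j • ∏ i ∈ Finset.univ.erase j, MvPolynomial.X i) z = 0 := by
      rw [Phi, psF]
      simp [cf_rec l p L (Nat.succ_pos D) hLm]
    beta_reduce at key
    rw [h0] at key
    simp only [Phi_sum hl0 hA, Phi_smul] at key
    simp only [hPP, mixed_Phi hl0 hA]
    exact key
end
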